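/- arXiv:2509.18001 — 3 statements merged into one kernel-verified Lean document; each statement's English description precedes it below -/
import Mathlib

section
/- Let f : ℝ^d → ℝ be (Fréchet) differentiable at x and let z be uniformly distributed on {−1,1}^d. Then the mean-squared finite-difference quotient converges to the squared gradient norm: lim_{δ→0⁺} E_z[((f(x + δz) − f(x))/δ)²] = ‖∇f(x)‖². -/
open Finset Filter

/-!
Differentiability makes each quotient `(f (x + δ z) - f x) / δ` converge to the directional
derivative `⟪∇f(x), z⟫`. The expectation is a finite average, so the limit passes through it, and
what remains is the second-moment identity `E_z[⟪a, z⟫²] = ‖a‖²`. Expanding the square, this is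
`E[z_i z_j] = δ_{ij}`: the off-diagonal terms vanish because flipping the `i`-th sign is a bijection
of the sign patterns that negates `z_i z_j`.
-/

/-- The coordinates of a Rademacher vector are uncorrelated with unit variance; the average is
left unnormalised. -/
lemma sum_sign_mul_sign {d : ℕ} (i j : Fin d) :
    ∑ s : Fin d → Bool, ((if s i then 1 else -1 : ℝ) * (if s j then 1 else -1))
      = if i = j then (2 : ℝ) ^ d else 0 := by
  split_ifs with h
  · subst h
    have hone : ∀ s : Fin d → Bool,
        ((if s i then 1 else -1 : ℝ) * (if s i then 1 else -1)) = 1 := by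
      intro s
      split_ifs <;> norm_num
    simp [hone]
  · refine Finset.sum_involution (fun s _ => Function.update s i (!s i)) ?_ ?_ ?_ ?_
    · intro s _
      rw [Function.update_self, Function.update_of_ne (Ne.symm h)]
      cases s i <;> cases s j <;> simp
    · intro s _ _ he
      have := congrFun he i
      simp at this
    · simp
    · simp

/-- Second moment of a Rademacher sum, with the average left unnormalised. -/
lemma sum_sq_rademacher {d : ℕ} (a : Fin d → ℝ) :
    ∑ s : Fin d → Bool, (∑ i, a i * (if s i then 1 else -1 : ℝ)) ^ 2
      = 2 ^ d * ∑ i, a i ^ 2 := by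
  calc ∑ s : Fin d → Bool, (∑ i, a i * (if s i then 1 else -1 : ℝ)) ^ 2
      = ∑ s : Fin d → Bool, ∑ i, ∑ j,
          a i * a j * ((if s i then 1 else -1 : ℝ) * (if s j then 1 else -1)) := by
        refine Finset.sum_congr rfl fun s _ => ?_
        rw [sq, Finset.sum_mul_sum]
        refine Finset.sum_congr rfl fun i _ => Finset.sum_congr rfl fun j _ => ?_
        ring
    _ = ∑ i, ∑ j, a i * a j * (if i = j then (2 : ℝ) ^ d else 0) := by
        rw [Finset.sum_comm]
        refine Finset.sum_congr rfl fun i _ => ?_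
        rw [Finset.sum_comm]
        refine Finset.sum_congr rfl fun j _ => ?_
        rw [← Finset.mul_sum, sum_sign_mul_sign]
    _ = 2 ^ d * ∑ i, a i ^ 2 := by
        simp only [mul_ite, mul_zero, Finset.sum_ite_eq, Finset.mem_univ, if_true,
          Finset.mul_sum]
        refine Finset.sum_congr rfl fun i _ => ?_
        ring

/-- **consistency of the Rademacher finite-difference estimator.**
Let `f : ℝ^d → ℝ` be differentiable at `x` and `z` uniform on `{−1,1}^d` (encoded by averaging
over all sign patterns `s : Fin d → Bool`).  Then
`lim_{δ→0⁺} E_z[((f(x + δ z) − f(x))/δ)²] = ‖∇f(x)‖²`. -/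
theorem finite_difference_rademacher_consistency
    {d : ℕ} (f : EuclideanSpace ℝ (Fin d) → ℝ)
    (x : EuclideanSpace ℝ (Fin d)) (hf : DifferentiableAt ℝ f x) :
    Tendsto
      (fun δ : ℝ => ((2 : ℝ) ^ d)⁻¹ * ∑ s : Fin d → Bool,
        ((f (x + δ • (EuclideanSpace.equiv (Fin d) ℝ).symm
            (fun j => if s j then 1 else -1)) - f x) / δ) ^ 2)
      (nhdsWithin 0 (Set.Ioi 0)) (nhds (‖gradient f x‖ ^ 2)) := by
  have hquot : ∀ v : EuclideanSpace ℝ (Fin d),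
      Tendsto (fun δ : ℝ => (f (x + δ • v) - f x) / δ) (nhdsWithin 0 (Set.Ioi 0))
        (nhds (∑ i, gradient f x i * v i)) := by
    intro v
    have hval : fderiv ℝ f x v = ∑ i, gradient f x i * v i := by
      have h := congrArg (fun L => L v) hf.hasGradientAt.hasFDerivAt.fderiv
      simp only [InnerProductSpace.toDual_apply_apply, PiLp.inner_apply] at h
      rw [h]
      refine Finset.sum_congr rfl fun i _ => ?_
      simp [mul_comm]
    have h := (hf.hasFDerivAt.hasLineDerivAt v).tendsto_slope_zero_right
    rw [hval] at h
    simpa only [smul_eq_mul, div_eq_inv_mul] using h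
  have hnorm : ‖gradient f x‖ ^ 2 = ((2 : ℝ) ^ d)⁻¹ * ∑ s : Fin d → Bool,
      (∑ i, gradient f x i * (if s i then 1 else -1 : ℝ)) ^ 2 := by
    rw [sum_sq_rademacher, inv_mul_cancel_left₀ (by positivity), EuclideanSpace.real_norm_sq_eq]
  rw [hnorm]
  exact (tendsto_finsetSum _ fun s _ => (hquot _).pow 2).const_mul _
end

section
/- Let f_1,…,f_n : ℝ^d → ℝ be twice continuously differentiable, let I = (i_1,…,i_m) consist of m indices drawn independently and uniformly at random from {1,…,n}, and set f_I = (1/m)∑_{j=1}^m f_{i_j}. Then for every x ∈ ℝ^d, E[∇²f_I(x)∇f_I(x)] = ∇²f(x)∇f(x) + (1/m)·((1/n)∑_{i=1}^n ∇²f_i(x)∇f_i(x) − ∇²f(x)∇f(x)), which equals the gradient at x of the scalar function y ↦ (1/2)‖∇f(y)‖² + (1/(2m)) tr(V(y)). -/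
/-!
Expanding `∇²f_I(x) ∇f_I(x)` bilinearly gives `m⁻² ∑ⱼ ∑ₖ H (I j) (v (I k))` with
`H i = ∇²fᵢ(x)` and `v i = ∇fᵢ(x)`. By independence and uniformity, each of the `m` diagonal
terms has mean `n⁻¹ ∑ᵢ H i (v i)`, and each of the `m (m - 1)` off-diagonal terms has mean
`∇²f(x) ∇f(x)`; the first identity follows. The moments are computed by induction on `m`
(`sum_tuples_first_moment`, `sum_tuples_second_moment`).

The second identity rests on `∇(½‖∇g‖²) = ∇²g ∇g` (`hasGradientAt_norm_sq_gradient`), where the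
adjoint of the Hessian produced by the chain rule is removed by symmetry of second derivatives.
-/

open Finset

/-- First moment of a sum of `m` independent uniform samples, with denominators cleared. -/
lemma sum_tuples_first_moment {V : Type*} [AddCommGroup V] [Module ℝ V] {n : ℕ}
    (v : Fin n → V) (m : ℕ) :
    (n : ℝ) • ∑ I : Fin m → Fin n, ∑ j, v (I j) = ((n : ℝ) ^ m * m) • ∑ a, v a := by
  induction m with
  | zero => simp
  | succ m ih =>
    rw [← (Fin.consEquiv fun _ => Fin n).sum_comp, Fintype.sum_prod_type]
    simp only [Fin.consEquiv_apply, Fin.sum_univ_succ, Fin.cons_zero, Fin.cons_succ,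
      sum_add_distrib, sum_const, card_univ, Fintype.card_fun, Fintype.card_fin,
      ← Nat.cast_smul_eq_nsmul ℝ, ← smul_sum, smul_add, ih]
    push_cast
    module

/-- Second mixed moment of sums of `m` independent uniform samples, with denominators cleared:
`m` diagonal pairs and `m (m - 1)` independent pairs. -/
lemma sum_tuples_second_moment {V : Type*} [NormedAddCommGroup V] [NormedSpace ℝ V] {n : ℕ}
    (A : Fin n → V →L[ℝ] V) (v : Fin n → V) (m : ℕ) :
    ((n : ℝ) ^ 2) • ∑ I : Fin m → Fin n, (∑ j, A (I j)) (∑ j, v (I j)) =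
      ((n : ℝ) ^ m * (m * n)) • ∑ a, A a (v a) +
        ((n : ℝ) ^ m * (m * (m - 1))) • (∑ a, A a) (∑ a, v a) := by
  induction m with
  | zero => simp
  | succ m ih =>
    have hv := congrArg (fun w => (∑ a, A a) w) (sum_tuples_first_moment v m)
    have hA := congrArg (fun L : V →L[ℝ] V => L (∑ a, v a)) (sum_tuples_first_moment A m)
    simp only [map_smul, _root_.smul_apply] at hv hA
    -- Split off the first sample `a` from the remaining `m` and expand bilinearly.
    have key : ∑ I : Fin (m + 1) → Fin n, (∑ j, A (I j)) (∑ j, v (I j)) =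
        ((n : ℝ) ^ m) • ∑ a, A a (v a)
          + (∑ a, A a) (∑ I : Fin m → Fin n, ∑ j, v (I j))
          + (∑ I : Fin m → Fin n, ∑ j, A (I j)) (∑ a, v a)
          + (n : ℝ) • ∑ I : Fin m → Fin n, (∑ j, A (I j)) (∑ j, v (I j)) := by
      rw [← (Fin.consEquiv fun _ => Fin n).sum_comp, Fintype.sum_prod_type]
      simp only [Fin.consEquiv_apply, Fin.sum_univ_succ (n := m), Fin.cons_zero, Fin.cons_succ]
      have e1 : ∀ a, ∑ I : Fin m → Fin n, (A a + ∑ j, A (I j)) (v a + ∑ j, v (I j)) =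
          ((n : ℝ) ^ m) • A a (v a) + A a (∑ I : Fin m → Fin n, ∑ j, v (I j))
          + (∑ I : Fin m → Fin n, ∑ j, A (I j)) (v a)
          + ∑ I : Fin m → Fin n, (∑ j, A (I j)) (∑ j, v (I j)) := by
        intro a
        have hc : ∑ _I : Fin m → Fin n, A a (v a) = ((n : ℝ) ^ m) • A a (v a) := by
          simp [← Nat.cast_smul_eq_nsmul ℝ]
        rw [← hc, map_sum (A a), _root_.sum_apply, ← sum_add_distrib,
          ← sum_add_distrib, ← sum_add_distrib]
        refine sum_congr rfl fun I _ => ?_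
        rw [_root_.add_apply, map_add, map_add]
        abel
      simp only [e1]
      rw [sum_add_distrib, sum_add_distrib, sum_add_distrib, ← smul_sum,
        ← _root_.sum_apply, ← map_sum, sum_const, card_univ, Fintype.card_fin,
        ← Nat.cast_smul_eq_nsmul ℝ]
    rw [key]
    generalize (∑ I : Fin m → Fin n, (∑ j, A (I j)) (∑ j, v (I j))) = S at *
    generalize (∑ a, A a) (∑ I : Fin m → Fin n, ∑ j, v (I j)) = P at *
    generalize (∑ I : Fin m → Fin n, ∑ j, A (I j)) (∑ a, v a) = Q at *
    -- Distribute `n ^ 2` so that each term matches a known moment identity.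
    have : ((n : ℝ) ^ 2) • (((n : ℝ) ^ m) • ∑ a, A a (v a) + P + Q + (n : ℝ) • S) =
        ((n : ℝ) ^ (m + 2)) • ∑ a, A a (v a) + (n : ℝ) • ((n : ℝ) • P) + (n : ℝ) • ((n : ℝ) • Q)
          + (n : ℝ) • (((n : ℝ) ^ 2) • S) := by module
    rw [this, hv, hA, ih]
    push_cast
    module

section Gradient

variable {E : Type*} [NormedAddCommGroup E] [InnerProductSpace ℝ E] [CompleteSpace E]

lemma differentiable_gradient {g : E → ℝ} (hg : ContDiff ℝ 2 g) :
    Differentiable ℝ (gradient g) :=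
  (InnerProductSpace.toDual ℝ E).symm.toContinuousLinearEquiv.differentiable.comp
    ((hg.fderiv_right (m := 1) (by norm_num)).differentiable (by norm_num))

lemma gradient_mul_sum {k : ℕ} (c : ℝ) {h : Fin k → E → ℝ} (hh : ∀ j, ContDiff ℝ 2 (h j)) :
    gradient (fun y => c * ∑ j, h j y) = fun y => c • ∑ j, gradient (h j) y := by
  funext y
  refine HasGradientAt.gradient ?_
  rw [hasGradientAt_iff_hasFDerivAt, map_smul, map_sum]
  refine HasFDerivAt.const_mul (HasFDerivAt.fun_sum fun j _ => ?_) c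
  exact (((hh j).differentiable (by norm_num)) y).hasGradientAt.hasFDerivAt

lemma fderiv_gradient_mul_sum {k : ℕ} (c : ℝ) {h : Fin k → E → ℝ}
    (hh : ∀ j, ContDiff ℝ 2 (h j)) (x : E) :
    fderiv ℝ (gradient fun y => c * ∑ j, h j y) x = c • ∑ j, fderiv ℝ (gradient (h j)) x := by
  rw [gradient_mul_sum c hh]
  exact (HasFDerivAt.const_smul (HasFDerivAt.fun_sum fun j _ =>
    (differentiable_gradient (hh j) x).hasFDerivAt) c).fderiv

/-- The Hessian, as the derivative of the gradient, represents the second derivative. -/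
lemma inner_fderiv_gradient {g : E → ℝ} (hg : ContDiff ℝ 2 g) (x u w : E) :
    inner ℝ (fderiv ℝ (gradient g) x u) w = fderiv ℝ (fderiv ℝ g) x u w := by
  have h1 : HasFDerivAt (fderiv ℝ g) (fderiv ℝ (fderiv ℝ g) x) x :=
    ((hg.fderiv_right (m := 1) (by norm_num)).differentiable (by norm_num) x).hasFDerivAt
  have h2 : HasFDerivAt (gradient g) _ x :=
    ((InnerProductSpace.toDual ℝ E).symm.toContinuousLinearEquiv.hasFDerivAt).comp x h1
  rw [h2.fderiv]
  exact InnerProductSpace.toDual_symm_apply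

lemma hasGradientAt_norm_sq_gradient {g : E → ℝ} (hg : ContDiff ℝ 2 g) (x : E) :
    HasGradientAt (fun y => ‖gradient g y‖ ^ 2)
      ((2 : ℝ) • fderiv ℝ (gradient g) x (gradient g x)) x := by
  rw [hasGradientAt_iff_hasFDerivAt]
  refine (differentiable_gradient hg x).hasFDerivAt.norm_sq.congr_fderiv ?_
  ext w
  -- Symmetry of the second derivative makes the Hessian self-adjoint.
  have hs : fderiv ℝ (fderiv ℝ g) x (gradient g x) w = fderiv ℝ (fderiv ℝ g) x w (gradient g x) :=
    (hg.contDiffAt.isSymmSndFDerivAt (by simp)) _ _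
  rw [← inner_fderiv_gradient hg, ← inner_fderiv_gradient hg, real_inner_comm (gradient g x)] at hs
  simp [hs]

end Gradient

/-- **m-USAM implicit regularization identity.**
Let `f₁, …, fₙ : ℝ^d → ℝ` be `C²`, let `I` consist of `m` indices drawn independently and
uniformly from `{1, …, n}` (so expectation over `I` is the average over all `n^m` tuples
`I : Fin m → Fin n`), and set `f_I = (1/m) ∑ⱼ f_{Iⱼ}`.  Then
`E[∇²f_I(x) ∇f_I(x)] = ∇²f(x)∇f(x) + (1/m)((1/n)∑ᵢ ∇²fᵢ(x)∇fᵢ(x) − ∇²f(x)∇f(x))`,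
and this equals the gradient at `x` of `y ↦ (1/2)‖∇f(y)‖² + (1/(2m)) tr V(y)`, where
`tr V(y) = (1/n)∑ᵢ ‖∇fᵢ(y)‖² − ‖∇f(y)‖²`.  Here `∇²g(x) w` is expressed as
`fderiv ℝ (gradient g) x w`. -/
theorem mUSAM_expected_hessian_gradient_identity
    {d n m : ℕ} (hn : 0 < n) (hm : 0 < m)
    (f : Fin n → EuclideanSpace ℝ (Fin d) → ℝ)
    (hf : ∀ i, ContDiff ℝ 2 (f i))
    (F : EuclideanSpace ℝ (Fin d) → ℝ)
    (hF : F = fun y => (n : ℝ)⁻¹ * ∑ i, f i y)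
    (x : EuclideanSpace ℝ (Fin d))
    (T : EuclideanSpace ℝ (Fin d))
    (hT : T = ((n : ℝ) ^ m)⁻¹ • ∑ I : Fin m → Fin n,
      fderiv ℝ (gradient fun y => (m : ℝ)⁻¹ * ∑ j, f (I j) y) x
        (gradient (fun y => (m : ℝ)⁻¹ * ∑ j, f (I j) y) x)) :
    T = fderiv ℝ (gradient F) x (gradient F x)
        + (m : ℝ)⁻¹ •
          (((n : ℝ)⁻¹ • ∑ i, fderiv ℝ (gradient (f i)) x (gradient (f i) x))
            - fderiv ℝ (gradient F) x (gradient F x)) ∧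
    T = gradient (fun y =>
          (1 / 2) * ‖gradient F y‖ ^ 2
            + (1 / (2 * (m : ℝ))) *
              ((n : ℝ)⁻¹ * (∑ i, ‖gradient (f i) y‖ ^ 2) - ‖gradient F y‖ ^ 2)) x := by
  have hn' : (n : ℝ) ≠ 0 := by positivity
  have hm' : (m : ℝ) ≠ 0 := by positivity
  have hF2 : ContDiff ℝ 2 F := by
    rw [hF]
    exact contDiff_const.mul (ContDiff.sum fun i _ => hf i)
  have hGF : gradient F x = (n : ℝ)⁻¹ • ∑ i, gradient (f i) x := by
    rw [hF, gradient_mul_sum _ hf]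
  have hHF : fderiv ℝ (gradient F) x = (n : ℝ)⁻¹ • ∑ i, fderiv ℝ (gradient (f i)) x := by
    rw [hF, fderiv_gradient_mul_sum _ hf]
  have h1 : T = fderiv ℝ (gradient F) x (gradient F x)
        + (m : ℝ)⁻¹ •
          (((n : ℝ)⁻¹ • ∑ i, fderiv ℝ (gradient (f i)) x (gradient (f i) x))
            - fderiv ℝ (gradient F) x (gradient F x)) := by
    have hI : ∀ I : Fin m → Fin n,
        fderiv ℝ (gradient fun y => (m : ℝ)⁻¹ * ∑ j, f (I j) y) x
          (gradient (fun y => (m : ℝ)⁻¹ * ∑ j, f (I j) y) x) =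
        ((m : ℝ)⁻¹ * (m : ℝ)⁻¹) • (∑ j, fderiv ℝ (gradient (f (I j))) x)
          (∑ j, gradient (f (I j)) x) := by
      intro I
      rw [fderiv_gradient_mul_sum _ fun j => hf (I j), gradient_mul_sum _ fun j => hf (I j),
        _root_.smul_apply, map_smul, smul_smul]
    have hS := sum_tuples_second_moment (fun i => fderiv ℝ (gradient (f i)) x)
      (fun i => gradient (f i) x) m
    rw [← eq_inv_smul_iff₀ (pow_ne_zero 2 hn')] at hS
    rw [hT, sum_congr rfl fun I _ => hI I, ← smul_sum, hS, hGF, hHF,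
      _root_.smul_apply, map_smul]
    match_scalars <;> field_simp
    ring
  refine ⟨h1, ?_⟩
  have hN := hasGradientAt_norm_sq_gradient hF2 x
  have hNi := fun i => hasGradientAt_norm_sq_gradient (hf i) x
  simp only [hasGradientAt_iff_hasFDerivAt] at hN hNi
  symm
  refine HasGradientAt.gradient ?_
  rw [hasGradientAt_iff_hasFDerivAt]
  refine ((hN.const_mul (1 / 2)).add
    ((((HasFDerivAt.fun_sum fun i (_ : i ∈ univ) => hNi i).const_mul (n : ℝ)⁻¹).sub
      hN).const_mul (1 / (2 * (m : ℝ))))).congr_fderiv ?_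
  rw [h1]
  simp only [map_add, map_sub, map_sum, map_smulₛₗ, conj_trivial, ← smul_sum]
  match_scalars <;> field_simp
end

section
/- Let f_1,…,f_n : ℝ^d → ℝ be three times continuously differentiable, let x ∈ ℝ^d, ρ, K ≥ 0, and suppose ‖D³f_i(y)‖ ≤ K for every index i and every y on the segment from x to x + ρ∇f(x). Let γ consist of b indices drawn independently and uniformly at random from {1,…,n} and ∇f_γ = (1/b)∑_{j=1}^b ∇f_{i_j}. Then the expected n-USAM update direction satisfies ‖E[∇f_γ(x + ρ∇f(x))] − ∇f(x) − ρ∇²f(x)∇f(x)‖ ≤ (K/2)ρ²‖∇f(x)‖², where ∇²f(x)∇f(x) = ∇((1/2)‖∇f‖²)(x). In particular, the leading drift of n-USAM is −∇(f + (ρ/2)‖∇f‖²) and contains no term involving the stochastic gradient noise covariance. -/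
/-!
The expectation over the `n ^ b` index tuples is exact: each index `i` occupies a given slot in
`n ^ (b - 1)` tuples, so the average of `∇f_γ(p)` over `γ` is `∇F(p)` at every fixed point `p`
(`average_gradient_minibatch`). Since n-USAM perturbs by the full-batch gradient, the point
`p = x + ρ∇F(x)` does not depend on `γ`, and the expected update direction is just `∇F(x + ρ∇F(x))`.

What remains is deterministic. Averaging the hypotheses gives `‖D³F‖ ≤ K` on the segment
(`norm_iteratedFDeriv_average_le`), and a second-order Taylor estimate with the sharp constant `1/2`
(`norm_taylor_one_le`) applied to the map `fderiv ℝ F` gives the bound. It carries over to gradients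
through the Riesz isometry.

The identity `∇²F ∇F = ∇(½‖∇F‖²)` is the chain rule together with the symmetry of the Hessian.
-/

open Finset

section Taylor

variable {E V : Type*} [NormedAddCommGroup E] [NormedSpace ℝ E]
  [NormedAddCommGroup V] [NormedSpace ℝ V]

/-- Taylor estimate with remainder `C / 2 * ‖v‖ ^ 2` for vector-valued maps. Mathlib's
`taylor_mean_remainder_bound` only gives the constant `C` here, so the factor `1 / 2` is obtained by
comparing the growth of the remainder along the segment with that of `t ↦ C ‖v‖² t² / 2`. -/
theorem norm_taylor_one_le {H : E → V} (hH : ContDiff ℝ 2 H) (x v : E) (C : ℝ)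
    (hC : ∀ t ∈ Set.Icc (0 : ℝ) 1, ‖fderiv ℝ (fderiv ℝ H) (x + t • v)‖ ≤ C) :
    ‖H (x + v) - H x - fderiv ℝ H x v‖ ≤ C / 2 * ‖v‖ ^ 2 := by
  have hd : Differentiable ℝ H := hH.differentiable (by norm_num)
  have hd' : Differentiable ℝ (fderiv ℝ H) :=
    (hH.fderiv_right (m := 1) (by norm_num)).differentiable (by norm_num)
  have hline : ∀ t : ℝ, HasDerivAt (fun t : ℝ => x + t • v) v t := fun t => by
    simpa using ((hasDerivAt_id t).smul_const v).const_add x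
  have hLip : ∀ t ∈ Set.Icc (0 : ℝ) 1,
      ‖fderiv ℝ H (x + t • v) - fderiv ℝ H x‖ ≤ C * ‖v‖ * t := by
    intro t ht
    have h := norm_image_sub_le_of_norm_deriv_le_segment' (a := 0) (b := 1) (C := C * ‖v‖)
      (f := fun t : ℝ => fderiv ℝ H (x + t • v))
      (f' := fun t => fderiv ℝ (fderiv ℝ H) (x + t • v) v)
      (fun s _ => ((hd' _).hasFDerivAt.comp_hasDerivAt s (hline s)).hasDerivWithinAt)
      (fun s hs => (ContinuousLinearMap.le_opNorm _ _).trans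
        (mul_le_mul_of_nonneg_right (hC s ⟨hs.1, hs.2.le⟩) (norm_nonneg v))) t ht
    simpa using h
  have hder : ∀ t : ℝ, HasDerivAt (fun t : ℝ => H (x + t • v) - H x - t • fderiv ℝ H x v)
      (fderiv ℝ H (x + t • v) v - fderiv ℝ H x v) t := fun t => by
    have h1 := ((hd _).hasFDerivAt.comp_hasDerivAt t (hline t)).sub_const (H x)
    simpa using h1.fun_sub ((hasDerivAt_id' t).smul_const (fderiv ℝ H x v))
  have h := image_norm_le_of_norm_deriv_right_le_deriv_boundary (a := 0) (b := 1)
    (f := fun t : ℝ => H (x + t • v) - H x - t • fderiv ℝ H x v)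
    (f' := fun t => fderiv ℝ H (x + t • v) v - fderiv ℝ H x v)
    (B := fun t => C / 2 * ‖v‖ ^ 2 * t ^ 2) (B' := fun t => C * ‖v‖ ^ 2 * t)
    (fun t _ => (hder t).continuousAt.continuousWithinAt)
    (fun t _ => (hder t).hasDerivWithinAt) (by simp)
    (fun t => by
      refine ((hasDerivAt_pow 2 t).const_mul (C / 2 * ‖v‖ ^ 2)).congr_deriv ?_
      norm_num
      ring)
    (fun t ht => by
      rw [← _root_.sub_apply]
      refine (ContinuousLinearMap.le_opNorm _ _).trans ?_
      refine (mul_le_mul_of_nonneg_right (hLip t ⟨ht.1, ht.2.le⟩) (norm_nonneg v)).trans ?_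
      exact le_of_eq (by ring))
    (Set.right_mem_Icc.2 zero_le_one)
  simpa using h

theorem norm_iteratedFDeriv_average_le {n m : ℕ} (hn : 0 < n) {f : Fin n → E → V}
    (hf : ∀ i, ContDiff ℝ m (f i)) {K : ℝ} {y : E} (hy : ∀ i, ‖iteratedFDeriv ℝ m (f i) y‖ ≤ K) :
    ‖iteratedFDeriv ℝ m (fun z => (n : ℝ)⁻¹ • ∑ i, f i z) y‖ ≤ K := by
  have hn' : (0 : ℝ) < n := by exact_mod_cast hn
  rw [iteratedFDeriv_const_smul_apply' (ContDiff.sum fun i _ => hf i).contDiffAt,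
    iteratedFDeriv_fun_sum_apply fun i _ => (hf i).contDiffAt, norm_smul, norm_inv,
    Real.norm_of_nonneg hn'.le, inv_mul_le_iff₀ hn']
  simpa using norm_sum_le_of_le univ fun i _ => hy i

end Taylor

section Gradient

variable {E : Type*} [NormedAddCommGroup E] [InnerProductSpace ℝ E] [CompleteSpace E]

theorem gradient_average {ι : Type*} [Fintype ι] {g : ι → E → ℝ}
    (hg : ∀ i, Differentiable ℝ (g i)) (c : ℝ) (p : E) :
    gradient (fun y => c * ∑ i, g i y) p = c • ∑ i, gradient (g i) p := by
  have h := (HasFDerivAt.fun_sum fun i (_ : i ∈ univ) => (hg i p).hasFDerivAt).const_mul c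
  simp only [gradient, h.fderiv, map_smulₛₗ, map_sum, conj_trivial]

/-- Averaging a mini-batch gradient over all index tuples gives the full-batch gradient: the
stochastic gradient is unbiased at every point that does not depend on the mini-batch. -/
theorem average_gradient_minibatch {n b : ℕ} (hn : 0 < n) (hb : 0 < b) {f : Fin n → E → ℝ}
    (hf : ∀ i, Differentiable ℝ (f i)) (p : E) :
    ((n : ℝ) ^ b)⁻¹ • ∑ γ : Fin b → Fin n, gradient (fun y => (b : ℝ)⁻¹ * ∑ j, f (γ j) y) p
      = gradient (fun y => (n : ℝ)⁻¹ * ∑ i, f i y) p := by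
  have hn' : (n : ℝ) ≠ 0 := by exact_mod_cast hn.ne'
  have hb' : (b : ℝ) ≠ 0 := by exact_mod_cast hb.ne'
  -- each value of `i` is taken at the slot `j` by exactly `n ^ (b - 1)` tuples
  have hcount : ∀ j : Fin b, ∑ γ : Fin b → Fin n, gradient (f (γ j)) p
      = (n : ℝ) ^ (b - 1) • ∑ i, gradient (f i) p := fun j => by
    have h := Fintype.sum_piFinset_apply (fun i => gradient (f i) p) univ j
    rw [Fintype.piFinset_univ] at h
    rw [h, ← Nat.cast_smul_eq_nsmul ℝ]
    simp
  simp only [gradient_average hf, gradient_average fun j => hf _]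
  rw [← smul_sum, sum_comm]
  simp only [hcount, sum_const, card_univ, Fintype.card_fin, ← Nat.cast_smul_eq_nsmul ℝ, smul_smul]
  congr 1
  obtain ⟨k, rfl⟩ : ∃ k, b = k + 1 := ⟨b - 1, by omega⟩
  rw [Nat.add_sub_cancel, pow_succ]
  field_simp

/-- The Riesz isometry from the dual to a real Hilbert space. Mathlib's `toDual` is semilinear over
`starRingEnd ℝ`, which is not syntactically the identity, so calculus lemmas about linear
isometries do not apply to it directly. -/
noncomputable def rieszSymm : (E →L[ℝ] ℝ) →ₗᵢ[ℝ] E where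
  toFun ℓ := (InnerProductSpace.toDual ℝ E).symm ℓ
  map_add' := map_add _
  map_smul' c ℓ := by simp
  norm_map' ℓ := (InnerProductSpace.toDual ℝ E).symm.norm_map ℓ

theorem gradient_eq_rieszSymm (F : E → ℝ) (y : E) : gradient F y = rieszSymm (fderiv ℝ F y) := rfl

theorem inner_rieszSymm (ℓ : E →L[ℝ] ℝ) (w : E) : inner ℝ (rieszSymm ℓ) w = ℓ w :=
  InnerProductSpace.toDual_symm_apply

theorem hasFDerivAt_gradient {F : E → ℝ} (hF : ContDiff ℝ 2 F) (x : E) :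
    HasFDerivAt (gradient F)
      (rieszSymm.toContinuousLinearMap.comp (fderiv ℝ (fderiv ℝ F) x)) x := by
  have hd : Differentiable ℝ (fderiv ℝ F) :=
    (hF.fderiv_right (m := 1) (by norm_num)).differentiable (by norm_num)
  exact rieszSymm.toContinuousLinearMap.hasFDerivAt.comp x (hd x).hasFDerivAt

theorem fderiv_gradient_apply {F : E → ℝ} (hF : ContDiff ℝ 2 F) (x v : E) :
    fderiv ℝ (gradient F) x v = rieszSymm (fderiv ℝ (fderiv ℝ F) x v) := by
  rw [(hasFDerivAt_gradient hF x).fderiv]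
  rfl

theorem norm_gradient_taylor_le {F : E → ℝ} (hF : ContDiff ℝ 3 F) (x v : E) (K : ℝ)
    (hK : ∀ t ∈ Set.Icc (0 : ℝ) 1, ‖iteratedFDeriv ℝ 3 F (x + t • v)‖ ≤ K) :
    ‖gradient F (x + v) - gradient F x - fderiv ℝ (gradient F) x v‖ ≤ K / 2 * ‖v‖ ^ 2 := by
  rw [fderiv_gradient_apply (hF.of_le (by norm_num)), gradient_eq_rieszSymm, gradient_eq_rieszSymm,
    ← map_sub, ← map_sub, LinearIsometry.norm_map]
  refine norm_taylor_one_le (hF.fderiv_right (by norm_num)) x v K fun t ht => ?_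
  rw [← norm_iteratedFDeriv_one, norm_iteratedFDeriv_fderiv, norm_iteratedFDeriv_fderiv]
  exact hK t ht

theorem fderiv_gradient_gradient {F : E → ℝ} (hF : ContDiff ℝ 2 F) (x : E) :
    fderiv ℝ (gradient F) x (gradient F x)
      = gradient (fun y => (1 / 2) * ‖gradient F y‖ ^ 2) x := by
  have h := ((hasFDerivAt_gradient hF x).norm_sq).const_mul (1 / 2 : ℝ)
  have hsymm : IsSymmSndFDerivAt ℝ F x := hF.contDiffAt.isSymmSndFDerivAt (by simp)
  refine ext_inner_right ℝ fun w => ?_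
  rw [inner_gradient_left, h.fderiv, fderiv_gradient_apply hF, inner_rieszSymm, hsymm.eq,
    ← inner_rieszSymm, real_inner_comm]
  simp

end Gradient

/-- **n-USAM drift expansion: no SGN term.**
Let `f₁, …, fₙ : ℝ^d → ℝ` be `C³` with full-batch loss `F = (1/n) ∑ᵢ fᵢ`, and suppose
`‖D³fᵢ(y)‖ ≤ K` for every `i` and every `y` on the segment from `x` to `x + ρ∇F(x)`.
Let `γ` consist of `b` indices drawn independently and uniformly from `{1, …, n}`
(expectation = average over all `n^b` tuples `γ : Fin b → Fin n`), with mini-batch loss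
`f_γ = (1/b) ∑ⱼ f_{γⱼ}`.  Then
`‖E[∇f_γ(x + ρ∇F(x))] − ∇F(x) − ρ∇²F(x)∇F(x)‖ ≤ (K/2) ρ² ‖∇F(x)‖²`, and
`∇²F(x)∇F(x) = ∇((1/2)‖∇F‖²)(x)`; so the leading drift of n-USAM is
`−∇(F + (ρ/2)‖∇F‖²)` with no stochastic-gradient-noise covariance term. -/
theorem nUSAM_expected_update_expansion
    {d n b : ℕ} (hn : 0 < n) (hb : 0 < b)
    (f : Fin n → EuclideanSpace ℝ (Fin d) → ℝ)
    (hf : ∀ i, ContDiff ℝ 3 (f i))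
    (F : EuclideanSpace ℝ (Fin d) → ℝ)
    (hF : F = fun y => (n : ℝ)⁻¹ * ∑ i, f i y)
    (x : EuclideanSpace ℝ (Fin d)) (ρ K : ℝ) (hρ : 0 ≤ ρ) (hK : 0 ≤ K)
    (hD3 : ∀ i, ∀ t ∈ Set.Icc (0 : ℝ) 1,
      ‖iteratedFDeriv ℝ 3 (f i) (x + t • (ρ • gradient F x))‖ ≤ K)
    (Fb : (Fin b → Fin n) → EuclideanSpace ℝ (Fin d) → ℝ)
    (hFb : ∀ γ, Fb γ = fun y => (b : ℝ)⁻¹ * ∑ j, f (γ j) y) :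
    ‖(((n : ℝ) ^ b)⁻¹ • ∑ γ : Fin b → Fin n,
          gradient (Fb γ) (x + ρ • gradient F x))
        - gradient F x
        - ρ • fderiv ℝ (gradient F) x (gradient F x)‖
      ≤ K / 2 * ρ ^ 2 * ‖gradient F x‖ ^ 2 ∧
    fderiv ℝ (gradient F) x (gradient F x)
      = gradient (fun y => (1 / 2) * ‖gradient F y‖ ^ 2) x := by
  have hFs : F = fun y => (n : ℝ)⁻¹ • ∑ i, f i y := hF
  have hF3 : ContDiff ℝ 3 F := by
    rw [hFs]
    exact (ContDiff.sum fun i _ => hf i).const_smul _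
  refine ⟨?_, fderiv_gradient_gradient (hF3.of_le (by norm_num)) x⟩
  have hE : ((n : ℝ) ^ b)⁻¹ • ∑ γ : Fin b → Fin n, gradient (Fb γ) (x + ρ • gradient F x)
      = gradient F (x + ρ • gradient F x) := by
    have h := average_gradient_minibatch hn hb (fun i => (hf i).differentiable (by norm_num))
      (x + ρ • gradient F x)
    simp only [← hFb, ← hF] at h
    exact h
  rw [hE, ← map_smul]
  refine (norm_gradient_taylor_le hF3 x (ρ • gradient F x) K fun t ht => ?_).trans_eq ?_
  · have h := norm_iteratedFDeriv_average_le hn hf fun i => hD3 i t ht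
    rwa [← hFs] at h
  · rw [norm_smul, Real.norm_of_nonneg hρ]
    ring
end
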